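/- arXiv:0805.1664 — 3 statements merged into one kernel-verified Lean document; each statement's English description precedes it below -/
import Mathlib

section
/- (Validity of the vertex-based lower bound) Let f : (Fin ℓ → ℝ) → ℂ be multiaffine, let a, b : Fin ℓ → ℝ satisfy a i ≤ b i for all i, let q⁰ : Fin ℓ → ℝ and κ ≥ 0. If 0 ∈ f '' (κ-inflation of Set.Icc a b about q⁰), then 0 ∈ convexHull ℝ (f '' (κ-inflation about q⁰ of the vertex set {v | ∀ i, v i = a i ∨ v i = b i})). -/
/-!
A function that is affine in each coordinate can be handled one coordinate at a time. If the
coordinate `q i` lies in the convex hull of `s i`, then moving that coordinate alone traces out an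
affine image of `s i`, so `f q` lies in the convex hull of the values of `f` at points whose
`i`-th coordinate is in `s i`. After all coordinates have been treated, `f` is seen to map a product
of convex hulls into the convex hull of the image of the product. A box is a product of
segments, that is, of convex hulls of pairs of endpoints, and inflation acts on each coordinate by
a homothety, which commutes with taking convex hulls.
-/

open Set

section Multiaffine

variable {ι 𝕜 E : Type*} {V : ι → Type*} [DecidableEq ι] [Ring 𝕜]
  [∀ i, AddCommGroup (V i)] [∀ i, Module 𝕜 (V i)] [AddCommGroup E] [Module 𝕜 E]

variable (𝕜) in
/-- A function on a product of modules is multiaffine if it is affine in each coordinate when the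
others are held fixed. Affineness is expressed by agreement with a bundled affine map, so that
the results on images of convex hulls under affine maps apply. -/
def IsMultiaffine (f : (∀ i, V i) → E) : Prop :=
  ∀ i q, ∃ A : V i →ᵃ[𝕜] E, ∀ x, f (Function.update q i x) = A x

namespace IsMultiaffine

theorem of_exists_smul_add {f : (ι → 𝕜) → E}
    (hf : ∀ i q, ∃ c d : E, ∀ t : 𝕜, f (Function.update q i t) = t • c + d) :
    IsMultiaffine 𝕜 f := by
  intro i q
  obtain ⟨c, d, hcd⟩ := hf i q
  exact ⟨(LinearMap.toSpanSingleton 𝕜 E c).toAffineMap + AffineMap.const 𝕜 𝕜 d, hcd⟩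

variable [PartialOrder 𝕜] {f : (∀ i, V i) → E}

theorem mem_convexHull_image_pi (hf : IsMultiaffine 𝕜 f) {s : ∀ i, Set (V i)}
    (S : Finset ι) {q : ∀ i, V i} (hS : ∀ i ∈ S, q i ∈ convexHull 𝕜 (s i))
    (hSc : ∀ i ∉ S, q i ∈ s i) :
    f q ∈ convexHull 𝕜 (f '' univ.pi s) := by
  induction S using Finset.induction_on generalizing q with
  | empty => exact subset_convexHull 𝕜 _ ⟨q, fun i _ ↦ hSc i (Finset.notMem_empty i), rfl⟩
  | insert i S hi ih =>
    obtain ⟨A, hA⟩ := hf i q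
    have hA_maps : A '' s i ⊆ convexHull 𝕜 (f '' univ.pi s) := by
      rintro _ ⟨x, hx, rfl⟩
      rw [← hA]
      refine ih (fun j hj ↦ ?_) (fun j hj ↦ ?_)
      · rw [Function.update_of_ne (ne_of_mem_of_not_mem hj hi)]
        exact hS j (Finset.mem_insert_of_mem hj)
      · obtain rfl | hji := eq_or_ne j i
        · rwa [Function.update_self]
        · rw [Function.update_of_ne hji]
          exact hSc j (by simp [hji, hj])
    have hAq : A (q i) ∈ convexHull 𝕜 (A '' s i) := by
      rw [← A.image_convexHull]
      exact mem_image_of_mem A (hS i (Finset.mem_insert_self i S))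
    rw [← Function.update_eq_self i q, hA]
    exact convexHull_min hA_maps (convex_convexHull 𝕜 _) hAq

theorem image_pi_convexHull_subset [Finite ι] (hf : IsMultiaffine 𝕜 f) (s : ∀ i, Set (V i)) :
    f '' univ.pi (fun i ↦ convexHull 𝕜 (s i)) ⊆ convexHull 𝕜 (f '' univ.pi s) := by
  have := Fintype.ofFinite ι
  rintro _ ⟨q, hq, rfl⟩
  exact hf.mem_convexHull_image_pi Finset.univ (fun i _ ↦ hq i (mem_univ i))
    (fun i hi ↦ absurd (Finset.mem_univ i) hi)

theorem image_piMap_pi_convexHull_subset [Finite ι] {W : ι → Type*}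
    [∀ i, AddCommGroup (W i)] [∀ i, Module 𝕜 (W i)] (hf : IsMultiaffine 𝕜 f)
    (φ : ∀ i, W i →ᵃ[𝕜] V i) (s : ∀ i, Set (W i)) :
    f '' (Pi.map (fun i ↦ φ i) '' univ.pi fun i ↦ convexHull 𝕜 (s i)) ⊆
      convexHull 𝕜 (f '' (Pi.map (fun i ↦ φ i) '' univ.pi s)) := by
  simp only [piMap_image_univ_pi, AffineMap.image_convexHull]
  exact hf.image_pi_convexHull_subset _

end IsMultiaffine

end Multiaffine

section Box

variable {ι 𝕜 : Type*} {V : ι → Type*}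

theorem Icc_subset_pi_convexHull_pair [Field 𝕜] [LinearOrder 𝕜] [IsStrictOrderedRing 𝕜]
    (a b : ι → 𝕜) :
    Icc a b ⊆ univ.pi fun i ↦ convexHull 𝕜 {a i, b i} := by
  simp only [← pi_univ_Icc, convexHull_pair]
  exact pi_mono fun _ _ ↦ Icc_subset_segment

theorem setOf_forall_eq_or_eq_eq_pi_pair (a b : ∀ i, V i) :
    {v | ∀ i, v i = a i ∨ v i = b i} = univ.pi fun i ↦ ({a i, b i} : Set (V i)) := by
  ext v
  simp only [mem_ofPred_eq, mem_univ_pi, mem_insert_iff, mem_singleton_iff]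

theorem inflation_eq_piMap_homothety [CommRing 𝕜] [∀ i, AddCommGroup (V i)]
    [∀ i, Module 𝕜 (V i)] (q₀ : ∀ i, V i) (κ : 𝕜) :
    (fun q ↦ q₀ + κ • (q - q₀)) = Pi.map fun i ↦ AffineMap.homothety (q₀ i) κ := by
  ext q i
  simp [AffineMap.homothety_apply, add_comm]

end Box

theorem vertex_lower_bound_valid_general {ι 𝕜 E : Type*} [Finite ι] [DecidableEq ι]
    [Field 𝕜] [LinearOrder 𝕜] [IsStrictOrderedRing 𝕜] [AddCommGroup E] [Module 𝕜 E]
    {f : (ι → 𝕜) → E} (hf : IsMultiaffine 𝕜 f) (a b q₀ : ι → 𝕜) (κ : 𝕜) :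
    f '' ((fun q ↦ q₀ + κ • (q - q₀)) '' Icc a b) ⊆
      convexHull 𝕜 (f '' ((fun q ↦ q₀ + κ • (q - q₀)) '' {v | ∀ i, v i = a i ∨ v i = b i})) := by
  rw [inflation_eq_piMap_homothety, setOf_forall_eq_or_eq_eq_pi_pair]
  calc
    _ ⊆ f '' (Pi.map (fun i ↦ AffineMap.homothety (q₀ i) κ) ''
          univ.pi fun i ↦ convexHull 𝕜 {a i, b i}) :=
      image_mono (image_mono (Icc_subset_pi_convexHull_pair a b))
    _ ⊆ _ := hf.image_piMap_pi_convexHull_subset _ _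

/-- **Validity of the vertex-based lower bound.** If the value set of the `κ`-inflated box
contains the origin, then so does the convex hull of the images of the `κ`-inflated
vertices of the box (for `f` multiaffine). -/
theorem vertex_lower_bound_valid (ℓ : ℕ) (f : (Fin ℓ → ℝ) → ℂ)
    (hf : ∀ (i : Fin ℓ) (q : Fin ℓ → ℝ), ∃ c d : ℂ,
      ∀ t : ℝ, f (Function.update q i t) = t • c + d)
    (a b : Fin ℓ → ℝ) (hab : ∀ i, a i ≤ b i)
    (q₀ : Fin ℓ → ℝ) (κ : ℝ) (hκ : 0 ≤ κ)
    (h : (0 : ℂ) ∈ f '' ((fun q => q₀ + κ • (q - q₀)) '' Set.Icc a b)) :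
    (0 : ℂ) ∈ convexHull ℝ
      (f '' ((fun q => q₀ + κ • (q - q₀)) '' {v : Fin ℓ → ℝ | ∀ i, v i = a i ∨ v i = b i})) :=
  vertex_lower_bound_valid_general (IsMultiaffine.of_exists_smul_add hf) a b q₀ κ h
end

section
/- (Theorem 5, fair-cut) In the bisection setup satisfying the fair-cut rule, suppose α, β : ℕ → (Fin ℓ → ℝ) satisfy, for every r: α r ∈ Set.Icc (a r) (b r), β r ∈ Set.Icc (a r) (b r), and α r j = β r j for every j ∉ U r. Then the Euclidean distance between α r and β r tends to 0 as r → ∞, i.e., (Σ_j (α r j − β r j)²)^{1/2} → 0; moreover, for every f : (Fin ℓ → ℝ) → ℂ that is continuous on Set.Icc (a 0) (b 0), f (α r) − f (β r) → 0 as r → ∞. -/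
/-!
Measure each side of the `r`-th box relative to the same side of the initial box. These relative
widths never increase, and shrinking the cut coordinate by a factor `θ < 1` lowers their sum by at
least `1 - θ` times the relative width being cut. The sum is antitone and nonnegative, so it
converges, its increments vanish, and the relative width of the cut coordinate tends to `0`. The
fair-cut rule says that the cut coordinate has the largest relative width in `U r`, so this one
quantity controls every coordinate in which `α r` and `β r` can differ.
-/

open Filter Topology Uniformity

variable {ι : Type*}

lemma tendsto_contracted_coord [Finite ι] {w : ℕ → ι → ℝ} {i : ℕ → ι} {θ : ℝ} (hθ : θ < 1)
    (hnonneg : ∀ r, 0 ≤ w r) (hanti : Antitone w)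
    (hcontract : ∀ r, w (r + 1) (i r) ≤ θ * w r (i r)) :
    Tendsto (fun r ↦ w r (i r)) atTop (𝓝 0) := by
  cases nonempty_fintype ι
  have hθ' : 0 < 1 - θ := sub_pos.2 hθ
  have hdecrement (r : ℕ) : (1 - θ) * w r (i r) ≤ ∑ j, w r j - ∑ j, w (r + 1) j :=
    calc (1 - θ) * w r (i r) ≤ w r (i r) - w (r + 1) (i r) := by linarith [hcontract r]
      _ ≤ ∑ j, (w r j - w (r + 1) j) :=
        Finset.single_le_sum (f := fun j ↦ w r j - w (r + 1) j)
          (fun j _ ↦ sub_nonneg.2 (hanti r.le_succ j)) (Finset.mem_univ (i r))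
      _ = ∑ j, w r j - ∑ j, w (r + 1) j := Finset.sum_sub_distrib ..
  have hsum_anti : Antitone fun r ↦ ∑ j, w r j :=
    fun _ _ hrs ↦ Finset.sum_le_sum fun j _ ↦ hanti hrs j
  have hsum_bdd : BddBelow (Set.range fun r ↦ ∑ j, w r j) :=
    ⟨0, Set.forall_mem_range.2 fun r ↦ Finset.sum_nonneg fun j _ ↦ hnonneg r j⟩
  have hsum := tendsto_atTop_ciInf hsum_anti hsum_bdd
  have hincrement : Tendsto (fun r ↦ (∑ j, w r j - ∑ j, w (r + 1) j) / (1 - θ)) atTop (𝓝 0) := by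
    simpa using (hsum.sub (hsum.comp (tendsto_add_atTop_nat 1))).div_const (1 - θ)
  exact squeeze_zero (fun r ↦ hnonneg r (i r))
    (fun r ↦ (le_div_iff₀' hθ').2 (hdecrement r)) hincrement

lemma tendsto_sub_of_continuousOn_isCompact {X E κ : Type*} [UniformSpace X] [AddGroup E]
    [UniformSpace E] [IsUniformAddGroup E] {K : Set X} (hK : IsCompact K) {f : X → E}
    (hf : ContinuousOn f K) {l : Filter κ} {x y : κ → X} (hx : ∀ᶠ r in l, x r ∈ K)
    (hy : ∀ᶠ r in l, y r ∈ K) (hxy : Tendsto (fun r ↦ (x r, y r)) l (𝓤 X)) :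
    Tendsto (fun r ↦ f (x r) - f (y r)) l (𝓝 0) := by
  have himage : Tendsto (fun r ↦ (f (x r), f (y r))) l (𝓤 E) :=
    Tendsto.comp (hK.uniformContinuousOn_of_continuous hf)
      (tendsto_inf.2 ⟨hxy, tendsto_principal.2 (hx.and hy)⟩)
  rwa [uniformity_eq_comap_nhds_zero_swapped, tendsto_comap_iff] at himage

/-- The length of the `j`-th side of the box `[a r, b r]` relative to that of `[a 0, b 0]`. This is
the reciprocal of the ratio minimised in the fair-cut rule, inverted so that the denominator does
not depend on `r`. -/
noncomputable def relativeWidth (a b : ℕ → ι → ℝ) (r : ℕ) (j : ι) : ℝ :=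
  (b r j - a r j) / (b 0 j - a 0 j)

section NestedBoxes

variable {a b : ℕ → ι → ℝ}

lemma relativeWidth_nonneg (h₀ : a 0 ≤ b 0) {r : ℕ} (hr : a r ≤ b r) :
    0 ≤ relativeWidth a b r :=
  fun j ↦ div_nonneg (sub_nonneg.2 (hr j)) (sub_nonneg.2 (h₀ j))

lemma relativeWidth_antitone (h₀ : a 0 ≤ b 0) (ha : Monotone a) (hb : Antitone b) :
    Antitone (relativeWidth a b) :=
  fun _ _ hrs j ↦ div_le_div_of_nonneg_right (sub_le_sub (hb hrs j) (ha hrs j))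
    (sub_nonneg.2 (h₀ j))

lemma abs_sub_le_mul_relativeWidth (h₀ : ∀ j, a 0 j < b 0 j) {r : ℕ} {S : Set ι} {k : ι}
    (hk : ∀ j ∈ S, relativeWidth a b r j ≤ relativeWidth a b r k) {x y : ι → ℝ}
    (hx : x ∈ Set.Icc (a r) (b r)) (hy : y ∈ Set.Icc (a r) (b r))
    (hxy : ∀ j, j ∉ S → x j = y j) (j : ι) :
    |x j - y j| ≤ (b 0 j - a 0 j) * relativeWidth a b r k := by
  have hwidth : 0 < b 0 j - a 0 j := sub_pos.2 (h₀ j)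
  by_cases hj : j ∈ S
  · calc |x j - y j| ≤ b r j - a r j :=
          abs_sub_le_of_le_of_le (hx.1 j) (hx.2 j) (hy.1 j) (hy.2 j)
      _ = (b 0 j - a 0 j) * relativeWidth a b r j := (mul_div_cancel₀ _ hwidth.ne').symm
      _ ≤ (b 0 j - a 0 j) * relativeWidth a b r k :=
        mul_le_mul_of_nonneg_left (hk j hj) hwidth.le
  · rw [hxy j hj, sub_self, abs_zero]
    exact mul_nonneg hwidth.le (relativeWidth_nonneg (fun j ↦ (h₀ j).le) (hx.1.trans hx.2) k)

lemma tendsto_sub_of_relativeWidth_le (h₀ : ∀ j, a 0 j < b 0 j) {i : ℕ → ι} {U : ℕ → Set ι}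
    (hcut : Tendsto (fun r ↦ relativeWidth a b r (i r)) atTop (𝓝 0))
    (hfair : ∀ r, ∀ j ∈ U r, relativeWidth a b r j ≤ relativeWidth a b r (i r))
    {α β : ℕ → ι → ℝ} (hα : ∀ r, α r ∈ Set.Icc (a r) (b r)) (hβ : ∀ r, β r ∈ Set.Icc (a r) (b r))
    (hagree : ∀ r, ∀ j, j ∉ U r → α r j = β r j) :
    Tendsto (fun r ↦ α r - β r) atTop (𝓝 0) := by
  refine tendsto_pi_nhds.2 fun j ↦ squeeze_zero_norm
    (fun r ↦ abs_sub_le_mul_relativeWidth h₀ (hfair r) (hα r) (hβ r) (hagree r) j) ?_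
  simpa only [mul_zero] using hcut.const_mul (b 0 j - a 0 j)

theorem theorem5_fair_cut_general [Fintype ι] {E : Type*} [AddGroup E] [UniformSpace E]
    [IsUniformAddGroup E] (h₀ : ∀ j, a 0 j < b 0 j) (ha : Monotone a) (hb : Antitone b)
    {i : ℕ → ι} {θ : ℝ} (hθ : θ < 1)
    (hcut : ∀ r, b (r + 1) (i r) - a (r + 1) (i r) ≤ θ * (b r (i r) - a r (i r)))
    {U : ℕ → Set ι}
    (hfair : ∀ r, ∀ j ∈ U r, relativeWidth a b r j ≤ relativeWidth a b r (i r))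
    {α β : ℕ → ι → ℝ} (hα : ∀ r, α r ∈ Set.Icc (a r) (b r)) (hβ : ∀ r, β r ∈ Set.Icc (a r) (b r))
    (hagree : ∀ r, ∀ j, j ∉ U r → α r j = β r j) :
    Tendsto (fun r ↦ √(∑ j, (α r j - β r j) ^ 2)) atTop (𝓝 0) ∧
      ∀ f : (ι → ℝ) → E, ContinuousOn f (Set.Icc (a 0) (b 0)) →
        Tendsto (fun r ↦ f (α r) - f (β r)) atTop (𝓝 0) := by
  have h₀' : a 0 ≤ b 0 := fun j ↦ (h₀ j).le
  have hcontract (r : ℕ) : relativeWidth a b (r + 1) (i r) ≤ θ * relativeWidth a b r (i r) :=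
    (div_le_div_of_nonneg_right (hcut r) (sub_nonneg.2 (h₀' (i r)))).trans_eq
      (mul_div_assoc ..)
  have hwidth : Tendsto (fun r ↦ relativeWidth a b r (i r)) atTop (𝓝 0) :=
    tendsto_contracted_coord hθ (fun r ↦ relativeWidth_nonneg h₀' ((hα r).1.trans (hα r).2))
      (relativeWidth_antitone h₀' ha hb) hcontract
  have hsub : Tendsto (fun r ↦ α r - β r) atTop (𝓝 0) :=
    tendsto_sub_of_relativeWidth_le h₀ hwidth hfair hα hβ hagree
  have hnested (r : ℕ) : Set.Icc (a r) (b r) ⊆ Set.Icc (a 0) (b 0) :=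
    Set.Icc_subset_Icc (ha r.zero_le) (hb r.zero_le)
  constructor
  · have hnorm : Continuous fun v : ι → ℝ ↦ √(∑ j, v j ^ 2) := by fun_prop
    exact (hnorm.tendsto' 0 0 (by simp)).comp hsub
  · intro f hf
    refine tendsto_sub_of_continuousOn_isCompact isCompact_Icc hf
      (.of_forall fun r ↦ hnested r (hα r)) (.of_forall fun r ↦ hnested r (hβ r)) ?_
    rwa [uniformity_eq_comap_nhds_zero_swapped, tendsto_comap_iff]

end NestedBoxes

/-- The boxes `[a r, b r]` arise from a nondegenerate box `[a 0, b 0]` by successively cutting them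
in half across the coordinates `i r`, keeping either half. -/
structure IsBisection (a b : ℕ → ι → ℝ) (i : ℕ → ι) : Prop where
  lt_zero : ∀ j, a 0 j < b 0 j
  eq_of_ne : ∀ r, ∀ j, j ≠ i r → a (r + 1) j = a r j ∧ b (r + 1) j = b r j
  cut : ∀ r,
    (a (r + 1) (i r) = (a r (i r) + b r (i r)) / 2 ∧ b (r + 1) (i r) = b r (i r)) ∨
    (a (r + 1) (i r) = a r (i r) ∧ b (r + 1) (i r) = (a r (i r) + b r (i r)) / 2)

namespace IsBisection

variable {a b : ℕ → ι → ℝ} {i : ℕ → ι}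

lemma width_cut (h : IsBisection a b i) (r : ℕ) :
    b (r + 1) (i r) - a (r + 1) (i r) = 1 / 2 * (b r (i r) - a r (i r)) := by
  rcases h.cut r with ⟨ha, hb⟩ | ⟨ha, hb⟩ <;> rw [ha, hb] <;> ring

lemma lt (h : IsBisection a b i) (r : ℕ) (j : ι) : a r j < b r j := by
  induction r with
  | zero => exact h.lt_zero j
  | succ r ih =>
    obtain rfl | hj := eq_or_ne j (i r)
    · linarith [h.width_cut r]
    · rwa [(h.eq_of_ne r j hj).1, (h.eq_of_ne r j hj).2]

lemma monotone_left (h : IsBisection a b i) : Monotone a := by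
  refine monotone_nat_of_le_succ fun r j ↦ ?_
  obtain rfl | hj := eq_or_ne j (i r)
  · rcases h.cut r with ⟨ha, -⟩ | ⟨ha, -⟩ <;> linarith [h.lt r (i r)]
  · exact (h.eq_of_ne r j hj).1.ge

lemma antitone_right (h : IsBisection a b i) : Antitone b := by
  refine antitone_nat_of_succ_le fun r j ↦ ?_
  obtain rfl | hj := eq_or_ne j (i r)
  · rcases h.cut r with ⟨-, hb⟩ | ⟨-, hb⟩ <;> linarith [h.lt r (i r)]
  · exact (h.eq_of_ne r j hj).2.le

lemma relativeWidth_le_iff (h : IsBisection a b i) {r : ℕ} {j k : ι} :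
    relativeWidth a b r j ≤ relativeWidth a b r k ↔
      (b 0 k - a 0 k) / (b r k - a r k) ≤ (b 0 j - a 0 j) / (b r j - a r j) := by
  have hpos (j : ι) : 0 < relativeWidth a b r j :=
    div_pos (sub_pos.2 (h.lt r j)) (sub_pos.2 (h.lt 0 j))
  simpa only [relativeWidth, inv_div] using (inv_le_inv₀ (hpos k) (hpos j)).symm

end IsBisection

/-- **Theorem 5, fair-cut.** In the bisection setup with the fair-cut rule, if
`α r, β r` lie in the `r`-th box and agree outside `U r`, then their Euclidean distance
tends to `0`, and `f (α r) - f (β r) → 0` for any `f` continuous on the initial box. -/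
theorem theorem5_fair_cut (ℓ : ℕ) (hℓ : 1 ≤ ℓ)
    (a b : ℕ → Fin ℓ → ℝ) (h₀ : ∀ j, a 0 j < b 0 j)
    (i : ℕ → Fin ℓ) (U : ℕ → Finset (Fin ℓ)) (hUne : ∀ r, (U r).Nonempty)
    (hiU : ∀ r, i r ∈ U r)
    (hfix : ∀ r, ∀ j, j ≠ i r → a (r + 1) j = a r j ∧ b (r + 1) j = b r j)
    (hcut : ∀ r,
      (a (r + 1) (i r) = (a r (i r) + b r (i r)) / 2 ∧ b (r + 1) (i r) = b r (i r)) ∨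
      (a (r + 1) (i r) = a r (i r) ∧ b (r + 1) (i r) = (a r (i r) + b r (i r)) / 2))
    (hfair : ∀ r, (b 0 (i r) - a 0 (i r)) / (b r (i r) - a r (i r)) =
      (U r).inf' (hUne r) (fun j => (b 0 j - a 0 j) / (b r j - a r j)))
    (α β : ℕ → Fin ℓ → ℝ)
    (hα : ∀ r, α r ∈ Set.Icc (a r) (b r)) (hβ : ∀ r, β r ∈ Set.Icc (a r) (b r))
    (hagree : ∀ r, ∀ j, j ∉ U r → α r j = β r j) :
    Filter.Tendsto (fun r => Real.sqrt (∑ j : Fin ℓ, (α r j - β r j) ^ 2))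
        Filter.atTop (nhds 0) ∧
      ∀ f : (Fin ℓ → ℝ) → ℂ, ContinuousOn f (Set.Icc (a 0) (b 0)) →
        Filter.Tendsto (fun r => f (α r) - f (β r)) Filter.atTop (nhds 0) := by
  have h : IsBisection a b i := ⟨h₀, hfix, hcut⟩
  exact theorem5_fair_cut_general h₀ h.monotone_left h.antitone_right one_half_lt_one
    (fun r ↦ (h.width_cut r).le) (U := fun r ↦ U r)
    (fun r _ hj ↦ h.relativeWidth_le_iff.2 ((hfair r).trans_le (Finset.inf'_le _ hj)))
    hα hβ hagree
end

section
/- (Soundness of subdomain elimination) Let f : (Fin ℓ → ℝ) → ℂ, let Q ⊆ (Fin ℓ → ℝ) be convex, and let q⁰ ∈ Q. Suppose q* ∈ Q and k̃ ≥ 0 satisfy f (q⁰ + k̃ • (q* − q⁰)) = 0. If κ ≥ 0 satisfies 0 ∉ convexHull ℝ (f '' (κ-inflation of Q about q⁰)), then κ < k̃. -/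
section Inflation

variable {𝕜 E : Type*} [AddCommGroup E]

/-- The `k`-inflation of the set `s` about the centre `c`, i.e. the image of `s` under
`AffineMap.homothety c k`. Any scalar `k` is allowed, so `k < 1` gives a contraction. -/
def inflation [Ring 𝕜] [Module 𝕜 E] (c : E) (k : 𝕜) (s : Set E) : Set E :=
  (fun x => c + k • (x - c)) '' s

theorem inflation_mono [Ring 𝕜] [Module 𝕜 E] (c : E) (k : 𝕜) {s t : Set E} (h : s ⊆ t) :
    inflation c k s ⊆ inflation c k t :=
  Set.image_mono h

theorem inflation_inflation [Ring 𝕜] [Module 𝕜 E] (c : E) (k l : 𝕜) (s : Set E) :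
    inflation c k (inflation c l s) = inflation c (k * l) s := by
  simp only [inflation, Set.image_image, add_sub_cancel_left, smul_smul]

theorem inflation_subset_self [Ring 𝕜] [PartialOrder 𝕜] [AddRightMono 𝕜] [Module 𝕜 E]
    {c : E} {k : 𝕜} {s : Set E} (hs : StarConvex 𝕜 c s) (hk₀ : 0 ≤ k) (hk₁ : k ≤ 1) :
    inflation c k s ⊆ s :=
  Set.image_subset_iff.2 fun _ hx => hs.add_smul_sub_mem hx hk₀ hk₁

variable [Field 𝕜] [LinearOrder 𝕜] [IsStrictOrderedRing 𝕜] [Module 𝕜 E]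

theorem inflation_subset_inflation {c : E} {k l : 𝕜} {s : Set E} (hs : StarConvex 𝕜 c s)
    (hk : 0 ≤ k) (hkl : k ≤ l) : inflation c k s ⊆ inflation c l s := by
  have hl : 0 ≤ l := hk.trans hkl
  -- This includes `l = 0`, where `k / l = 0` by convention: then `k = 0` as well.
  have hmul : l * (k / l) = k := mul_div_cancel_of_imp' fun h => le_antisymm (h ▸ hkl) hk
  calc
    inflation c k s = inflation c l (inflation c (k / l) s) := by rw [inflation_inflation, hmul]
    _ ⊆ inflation c l s :=
      inflation_mono c l <|
        inflation_subset_self hs (div_nonneg hk hl) (div_le_one_of_le₀ hkl hl)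

theorem subdomain_elimination_sound_general {F : Type*} [AddCommMonoid F] [Module 𝕜 F]
    {f : E → F} {y : F} {Q : Set E} {q₀ qs : E} {kt κ : 𝕜} (hQ : StarConvex 𝕜 q₀ Q)
    (hqs : qs ∈ Q) (hkt : 0 ≤ kt) (hy : f (q₀ + kt • (qs - q₀)) = y)
    (hexc : y ∉ convexHull 𝕜 (f '' inflation q₀ κ Q)) : κ < kt := by
  by_contra! hle
  have hmem : q₀ + kt • (qs - q₀) ∈ inflation q₀ κ Q :=
    inflation_subset_inflation hQ hkt hle (Set.mem_image_of_mem _ hqs)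
  exact hexc (subset_convexHull 𝕜 _ ⟨_, hmem, hy⟩)

end Inflation

/-- **Soundness of subdomain elimination.** If a destabilizing parameter `q* ∈ Q`
exists at inflation `kt`, and the convex-hull test excludes the origin at inflation `κ`,
then `κ < kt`. -/
theorem subdomain_elimination_sound (ℓ : ℕ) (f : (Fin ℓ → ℝ) → ℂ)
    (Q : Set (Fin ℓ → ℝ)) (hQ : Convex ℝ Q) (q₀ : Fin ℓ → ℝ) (hq₀ : q₀ ∈ Q)
    (qs : Fin ℓ → ℝ) (hqs : qs ∈ Q) (kt : ℝ) (hkt : 0 ≤ kt)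
    (hzero : f (q₀ + kt • (qs - q₀)) = 0)
    (κ : ℝ) (hκ : 0 ≤ κ)
    (hexc : (0 : ℂ) ∉ convexHull ℝ (f '' ((fun q => q₀ + κ • (q - q₀)) '' Q))) :
    κ < kt :=
  subdomain_elimination_sound_general (hQ.starConvex hq₀) hqs hkt hzero hexc
end
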